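/- Let T be a finite tree with at least three vertices. Then the domination subdivision number of T equals 3 (i.e., sd(T) = 3) if and only if T is a general corona of a tree. -/

import Mathlib

open SimpleGraph

namespace GenCorona

universe u

/-- A vertex neighborhood partition of a graph `G`: for every vertex `v`, a partition
of the open neighborhood `N_G(v)` into nonempty sets. -/
structure NbhdPartition {V : Type u} (G : SimpleGraph V) where
  part : V → Set (Set V)
  nonempty : ∀ v : V, ∀ A ∈ part v, A.Nonempty
  subset_nbhd : ∀ v : V, ∀ A ∈ part v, A ⊆ G.neighborSet v
  covers : ∀ v : V, ∀ u ∈ G.neighborSet v, ∃ A ∈ part v, u ∈ A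
  eq_of_inter : ∀ v : V, ∀ A ∈ part v, ∀ B ∈ part v, (A ∩ B).Nonempty → A = B

variable {V : Type u}

/-- The vertex type of the general corona `G ∘ 𝒫`: external vertices `(v,1)` are encoded
as `Sum.inl v`, internal vertices `(v,A)` (with `A ∈ 𝒫(v)`) as `Sum.inr ⟨(v,A), _⟩`. -/
abbrev CoronaVert (G : SimpleGraph V) (P : NbhdPartition G) : Type u :=
  V ⊕ {p : V × Set V // p.2 ∈ P.part p.1}

/-- The general corona `G ∘ 𝒫`. -/
def corona (G : SimpleGraph V) (P : NbhdPartition G) : SimpleGraph (CoronaVert G P) :=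
  SimpleGraph.fromRel fun x y =>
    match x, y with
    | Sum.inl v, Sum.inr p => v = p.val.1
    | Sum.inr p, Sum.inr q =>
        G.Adj p.val.1 q.val.1 ∧ q.val.1 ∈ p.val.2 ∧ p.val.1 ∈ q.val.2
    | _, _ => False

/-- The set of external vertices of the general corona. -/
def Ext (G : SimpleGraph V) (P : NbhdPartition G) : Set (CoronaVert G P) :=
  Set.range Sum.inl

/-- A graph is a general corona of a tree if it is isomorphic to `T ∘ 𝒫` for some finite
tree `T` and some vertex neighborhood partition `𝒫` of `T`. -/
def IsGeneralCoronaOfTree {W : Type*} (H : SimpleGraph W) : Prop :=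
  ∃ (n : ℕ) (T : SimpleGraph (Fin n)) (P : NbhdPartition T),
    T.IsTree ∧ Nonempty (H ≃g corona T P)

/-- A graph `H` is a general corona of a tree with external vertex set `E`. -/
def IsGenCoronaWithExt {W : Type*} (H : SimpleGraph W) (E : Set W) : Prop :=
  ∃ (n : ℕ) (T : SimpleGraph (Fin n)) (P : NbhdPartition T),
    T.IsTree ∧ ∃ f : H ≃g corona T P, E = ⇑f ⁻¹' Ext T P

/-- `D` is a dominating set of `G`. -/
def IsDominating (G : SimpleGraph V) (D : Set V) : Prop :=
  ∀ v ∉ D, ∃ u ∈ D, G.Adj v u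

/-- `S` is a 2-packing of `G`: any two distinct vertices of `S` are at distance
greater than 2 (where the extended distance of unreachable vertices is `⊤`). -/
def Is2Packing (G : SimpleGraph V) (S : Set V) : Prop :=
  ∀ u ∈ S, ∀ v ∈ S, u ≠ v → 2 < G.edist u v

/-- A leaf is a vertex of degree 1, i.e. with exactly one neighbor. -/
def IsLeaf (G : SimpleGraph V) (v : V) : Prop :=
  (G.neighborSet v).ncard = 1

/-- The domination number: the minimum size of a dominating set. -/
noncomputable def dominationNumber (G : SimpleGraph V) : ℕ :=
  sInf {n : ℕ | ∃ D : Set V, IsDominating G D ∧ D.ncard = n}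

/-- The graph obtained from `G` by subdividing every edge in `F` (each once):
for each `e ∈ F` a new vertex `Sum.inr e` replaces the edge `e` by a path of length two. -/
def subdivide (G : SimpleGraph V) (F : Set (Sym2 V)) : SimpleGraph (V ⊕ F) :=
  SimpleGraph.fromRel fun x y =>
    match x, y with
    | Sum.inl u, Sum.inl v => G.Adj u v ∧ s(u, v) ∉ F
    | Sum.inl u, Sum.inr e => u ∈ e.val
    | _, _ => False

/-- The domination subdivision number `sd(G)`: the minimum number of edges which must be
subdivided (each edge at most once) in order to increase the domination number. -/
noncomputable def sd (G : SimpleGraph V) : ℕ :=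
  sInf {k : ℕ | ∃ F : Set (Sym2 V), F ⊆ G.edgeSet ∧ F.ncard = k ∧
    dominationNumber G < dominationNumber (subdivide G F)}

/-- The corona `G ∘ K₁`: attach one new pendant vertex `Sum.inr v` to each vertex
`Sum.inl v` of `G`. -/
def coronaK1 (G : SimpleGraph V) : SimpleGraph (V ⊕ V) :=
  SimpleGraph.fromRel fun x y =>
    match x, y with
    | Sum.inl u, Sum.inl w => G.Adj u w
    | Sum.inl u, Sum.inr w => u = w
    | _, _ => False

/-- The 2-subdivision `S₂(G)`: every edge `uv` is replaced by a path `(u, x₁, x₂, v)`;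
the new vertex `Sum.inr ⟨(u,v), _⟩` is the subdivision vertex adjacent to `u`. -/
def twoSubdivision (G : SimpleGraph V) : SimpleGraph (V ⊕ {p : V × V // G.Adj p.1 p.2}) :=
  SimpleGraph.fromRel fun x y =>
    match x, y with
    | Sum.inl u, Sum.inr p => u = p.val.1
    | Sum.inr p, Sum.inr q => p.val.1 = q.val.2 ∧ p.val.2 = q.val.1
    | _, _ => False

/-- `𝒫'` is a refinement of `𝒫`. -/
def Refines {G : SimpleGraph V} (P' P : NbhdPartition G) : Prop :=
  ∀ v : V, ∀ A ∈ P'.part v, ∃ B ∈ P.part v, A ⊆ B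

/-- The graph obtained by contracting the two vertices `x` and `y` of `G` to the single
vertex `x` (the vertex `y` is removed, and `x` becomes adjacent to all former
neighbors of `y`). -/
def contractPair {W : Type*} (G : SimpleGraph W) (x y : W) :
    SimpleGraph {w : W // w ≠ y} :=
  SimpleGraph.fromRel fun a b =>
    G.Adj a.val b.val ∨ (a.val = x ∧ G.Adj y b.val) ∨ (b.val = x ∧ G.Adj a.val y)

/-- The graph obtained from `G` by attaching a path `(x, y, z)` (encoded as
`Sum.inr 0, Sum.inr 1, Sum.inr 2`) to the vertex `v` via the edge `v x`. -/
def attachPath3 {W : Type*} (G : SimpleGraph W) (v : W) : SimpleGraph (W ⊕ Fin 3) :=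
  SimpleGraph.fromRel fun a b =>
    match a, b with
    | Sum.inl u, Sum.inl w => G.Adj u w
    | Sum.inl u, Sum.inr i => u = v ∧ i = 0
    | Sum.inr i, Sum.inr j => (i = 0 ∧ j = 1) ∨ (i = 1 ∧ j = 2)
    | _, _ => False

/-- The graph obtained from `G` by attaching a path `(x, y)` (encoded as
`Sum.inr 0, Sum.inr 1`) to the vertex `v` via the edge `v x`. -/
def attachPath2 {W : Type*} (G : SimpleGraph W) (v : W) : SimpleGraph (W ⊕ Fin 2) :=
  SimpleGraph.fromRel fun a b =>
    match a, b with
    | Sum.inl u, Sum.inl w => G.Adj u w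
    | Sum.inl u, Sum.inr i => u = v ∧ i = 0
    | Sum.inr i, Sum.inr j => i = 0 ∧ j = 1
    | _, _ => False

/-- The family `𝓕` of labeled trees; the label of a vertex is `A` when it belongs to the
distinguished set `L`, and `B` otherwise.  The family contains the labeled path `P₄`
(leaves labeled `A`, support vertices labeled `B`) and is closed under the two
attachment operations. -/
inductive LabF : ∀ {W : Type}, SimpleGraph W → Set W → Prop where
  | base : LabF (SimpleGraph.pathGraph 4) ({0, 3} : Set (Fin 4))
  | opA {W : Type} {G : SimpleGraph W} {L : Set W} (v : W) :
      LabF G L → v ∈ L →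
        LabF (attachPath3 G v) (Sum.inl '' L ∪ {Sum.inr (2 : Fin 3)})
  | opB {W : Type} {G : SimpleGraph W} {L : Set W} (v : W) :
      LabF G L → v ∉ L →
        LabF (attachPath2 G v) (Sum.inl '' L ∪ {Sum.inr (1 : Fin 2)})

/-- A tree `T` belongs to the family `𝓕` if it admits a labeling constructed by the
above rules, i.e. it is isomorphic to a member of the inductively generated family. -/
def MemF {W : Type*} (T : SimpleGraph W) : Prop :=
  ∃ (W' : Type) (G : SimpleGraph W') (L : Set W'), LabF G L ∧ Nonempty (T ≃g G)

/-! ### Adjacency in the auxiliary graphs -/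

section Adjacency

variable {G : SimpleGraph V} {F : Set (Sym2 V)}

@[simp] lemma subdivide_adj_inl_inl {u v : V} :
    (subdivide G F).Adj (Sum.inl u) (Sum.inl v) ↔ G.Adj u v ∧ s(u, v) ∉ F := by
  simp only [subdivide, SimpleGraph.fromRel_adj, ne_eq, Sum.inl.injEq, G.adj_comm v u,
    Sym2.eq_swap (a := v), or_self]
  exact ⟨fun h => h.2, fun h => ⟨h.1.ne, h⟩⟩

@[simp] lemma subdivide_adj_inl_inr {u : V} {e : F} :
    (subdivide G F).Adj (Sum.inl u) (Sum.inr e) ↔ u ∈ e.val := by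
  simp [subdivide]

@[simp] lemma subdivide_adj_inr_inl {u : V} {e : F} :
    (subdivide G F).Adj (Sum.inr e) (Sum.inl u) ↔ u ∈ e.val := by
  simp [subdivide]

@[simp] lemma not_subdivide_adj_inr_inr {e f : F} :
    ¬ (subdivide G F).Adj (Sum.inr e) (Sum.inr f) := by
  simp [subdivide]

variable {P : NbhdPartition G}

@[simp] lemma not_corona_adj_inl_inl {u v : V} :
    ¬ (corona G P).Adj (Sum.inl u) (Sum.inl v) := by
  simp [corona]

@[simp] lemma corona_adj_inl_inr {v : V} {p : {p : V × Set V // p.2 ∈ P.part p.1}} :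
    (corona G P).Adj (Sum.inl v) (Sum.inr p) ↔ v = p.val.1 := by
  simp [corona]

@[simp] lemma corona_adj_inr_inl {v : V} {p : {p : V × Set V // p.2 ∈ P.part p.1}} :
    (corona G P).Adj (Sum.inr p) (Sum.inl v) ↔ v = p.val.1 := by
  simp [corona]

@[simp] lemma corona_adj_inr_inr {p q : {p : V × Set V // p.2 ∈ P.part p.1}} :
    (corona G P).Adj (Sum.inr p) (Sum.inr q) ↔
      G.Adj p.val.1 q.val.1 ∧ q.val.1 ∈ p.val.2 ∧ p.val.1 ∈ q.val.2 := by
  simp only [corona, SimpleGraph.fromRel_adj, ne_eq, Sum.inr.injEq, G.adj_comm q.val.1]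
  constructor
  · tauto
  · refine fun h => ⟨?_, Or.inl h⟩
    rintro rfl
    exact G.irrefl h.1

end Adjacency

/-! ### Domination and packings -/

/-- The closed neighborhoods of the vertices of `S` are pairwise disjoint. -/
def IsPacking (G : SimpleGraph V) (S : Set V) : Prop :=
  ∀ s ∈ S, ∀ t ∈ S, ∀ x, (x = s ∨ G.Adj x s) → (x = t ∨ G.Adj x t) → s = t

/-- The closed neighborhoods of the vertices of `E` partition the vertex set. -/
structure IsPerfectCode (G : SimpleGraph V) (E : Set V) : Prop where
  packing : IsPacking G E
  dominating : IsDominating G E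

/-- Every vertex outside `E` has a neighbor outside `E`. -/
def HasNoIsolatedOutside (G : SimpleGraph V) (E : Set V) : Prop :=
  ∀ x ∉ E, ∃ y ∉ E, G.Adj x y

lemma dominationNumber_le {G : SimpleGraph V} {D : Set V} (hD : IsDominating G D) :
    dominationNumber G ≤ D.ncard :=
  Nat.sInf_le ⟨D, hD, rfl⟩

lemma exists_isDominating_ncard_eq (G : SimpleGraph V) :
    ∃ D : Set V, IsDominating G D ∧ D.ncard = dominationNumber G :=
  Nat.sInf_mem (s := {n : ℕ | ∃ D : Set V, IsDominating G D ∧ D.ncard = n})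
    ⟨_, Set.univ, fun v hv => absurd (Set.mem_univ v) hv, rfl⟩

lemma IsPacking.ncard_le_dominationNumber [Finite V] {G : SimpleGraph V} {S : Set V}
    (hS : IsPacking G S) : S.ncard ≤ dominationNumber G := by
  obtain ⟨D, hD, hcard⟩ := exists_isDominating_ncard_eq G
  have hdom : ∀ s, ∃ d ∈ D, d = s ∨ G.Adj d s := by
    intro s
    by_cases hs : s ∈ D
    · exact ⟨s, hs, Or.inl rfl⟩
    · obtain ⟨d, hd, hsd⟩ := hD s hs
      exact ⟨d, hd, Or.inr hsd.symm⟩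
  choose g hgD hg using hdom
  rw [← hcard]
  exact Set.ncard_le_ncard_of_injOn g (fun s _ => hgD s)
    (fun s hs t ht hst => hS s hs t ht (g s) (hg s) (hst ▸ hg t))

lemma IsPerfectCode.ncard_eq [Finite V] {G : SimpleGraph V} {E : Set V}
    (hE : IsPerfectCode G E) : E.ncard = dominationNumber G :=
  le_antisymm hE.packing.ncard_le_dominationNumber (dominationNumber_le hE.dominating)

/-- The edge `yz` together with all edges joining `y` or `z` to a vertex of `S`. -/
def packingEdges (G : SimpleGraph V) (S : Set V) (y z : V) : Set (Sym2 V) :=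
  {e | e = s(y, z) ∨ ∃ s ∈ S, (G.Adj y s ∧ e = s(y, s)) ∨ (G.Adj z s ∧ e = s(z, s))}

lemma packingEdges_subset {G : SimpleGraph V} {S : Set V} {y z : V} (hyz : G.Adj y z) :
    packingEdges G S y z ⊆ G.edgeSet := by
  rintro e (rfl | ⟨s, -, ⟨h, rfl⟩ | ⟨h, rfl⟩⟩) <;> simpa

/-- Subdividing the edges of `packingEdges G S y z` makes the new vertex on `yz` available
for enlarging the packing `S`. -/
lemma IsPacking.ncard_lt_dominationNumber_subdivide [Finite V] {G : SimpleGraph V} {S : Set V}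
    (hS : IsPacking G S) {y z : V} (hy : y ∉ S) (hz : z ∉ S) :
    S.ncard < dominationNumber (subdivide G (packingEdges G S y z)) := by
  set F := packingEdges G S y z
  let q : F := ⟨s(y, z), Or.inl rfl⟩
  have hpack : IsPacking (subdivide G F) (insert (Sum.inr q) (Sum.inl '' S)) := by
    have hold : ∀ s ∈ S, ∀ t ∈ S, ∀ x, (x = Sum.inl s ∨ (subdivide G F).Adj x (Sum.inl s)) →
        (x = Sum.inl t ∨ (subdivide G F).Adj x (Sum.inl t)) → s = t := by
      rintro s hs t ht (x | ⟨e, he⟩) h1 h2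
      · simp only [Sum.inl.injEq, subdivide_adj_inl_inl] at h1 h2
        exact hS s hs t ht x (h1.imp_right And.left) (h2.imp_right And.left)
      · simp only [reduceCtorEq, subdivide_adj_inr_inl, false_or] at h1 h2
        rcases he with rfl | ⟨w, hw, ⟨hyw, rfl⟩ | ⟨hyw, rfl⟩⟩ <;> simp at h1 h2 <;> grind
    have hnew : ∀ s ∈ S, ∀ x, (x = Sum.inl s ∨ (subdivide G F).Adj x (Sum.inl s)) →
        ¬ (x = Sum.inr q ∨ (subdivide G F).Adj x (Sum.inr q)) := by
      rintro s hs (x | e) h1 h2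
      · simp only [Sum.inl.injEq, subdivide_adj_inl_inl, reduceCtorEq, subdivide_adj_inl_inr,
          false_or, q, Sym2.mem_iff] at h1 h2
        rcases h1 with rfl | ⟨hxs, hxF⟩
        · rcases h2 with rfl | rfl <;> contradiction
        · rcases h2 with rfl | rfl
          · exact hxF (Or.inr ⟨s, hs, Or.inl ⟨hxs, rfl⟩⟩)
          · exact hxF (Or.inr ⟨s, hs, Or.inr ⟨hxs, rfl⟩⟩)
      · simp only [reduceCtorEq, subdivide_adj_inr_inl, false_or, Sum.inr.injEq,
          not_subdivide_adj_inr_inr, or_false] at h1 h2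
        subst h2
        simp only [q, Sym2.mem_iff] at h1
        rcases h1 with rfl | rfl <;> contradiction
    rintro _ (rfl | ⟨s, hs, rfl⟩) _ (rfl | ⟨t, ht, rfl⟩) x h1 h2
    · rfl
    · exact absurd h1 (hnew t ht x h2)
    · exact absurd h2 (hnew s hs x h1)
    · rw [hold s hs t ht x h1 h2]
  have := hpack.ncard_le_dominationNumber
  rw [Set.ncard_insert_of_notMem (by simp), Set.ncard_image_of_injective _ Sum.inl_injective]
    at this
  exact this

lemma sd_le_ncard {G : SimpleGraph V} {F : Set (Sym2 V)} (hF : F ⊆ G.edgeSet)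
    (h : dominationNumber G < dominationNumber (subdivide G F)) : sd G ≤ F.ncard :=
  Nat.sInf_le ⟨F, hF, rfl, h⟩

/-! ### Rooted trees -/

/-- `π` is the parent function of the tree `T` rooted at `r`. -/
structure IsParent (T : SimpleGraph V) (r : V) (π : V → V) : Prop where
  root : π r = r
  adj : ∀ x, x ≠ r → T.Adj x (π x)
  dist : ∀ x, x ≠ r → T.dist r x = T.dist r (π x) + 1
  eq_or_eq : ∀ x y, T.Adj x y → (x ≠ r ∧ π x = y) ∨ (y ≠ r ∧ π y = x)

lemma eq_of_adj_of_dist_eq {T : SimpleGraph V} (hT : T.IsTree) {r x y z : V}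
    (hy : T.Adj y x) (hz : T.Adj z x) (hdy : T.dist r x = T.dist r y + 1)
    (hdz : T.dist r x = T.dist r z + 1) : y = z := by
  obtain ⟨p, hp⟩ := hT.connected.exists_walk_length_eq_dist r y
  obtain ⟨q, hq⟩ := hT.connected.exists_walk_length_eq_dist r z
  have h1 : (p.concat hy).IsPath := Walk.isPath_of_length_eq_dist _ (by simp [hp, hdy])
  have h2 : (q.concat hz).IsPath := Walk.isPath_of_length_eq_dist _ (by simp [hq, hdz])
  have := congrArg Walk.penultimate ((hT.existsUnique_path r x).unique h1 h2)
  simpa using this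

lemma exists_isParent {T : SimpleGraph V} (hT : T.IsTree) (r : V) : ∃ π, IsParent T r π := by
  have hex : ∀ x, ∃ y, (x = r → y = r) ∧
      (x ≠ r → T.Adj x y ∧ T.dist r x = T.dist r y + 1) := by
    intro x
    by_cases hx : x = r
    · exact ⟨r, fun _ => rfl, fun h => absurd hx h⟩
    · obtain ⟨p, hp⟩ := hT.connected.exists_walk_length_eq_dist r x
      have hnil : ¬ p.Nil := Walk.not_nil_of_ne (Ne.symm hx)
      refine ⟨p.penultimate, fun h => absurd h hx, fun _ => ?_⟩
      have hadj := p.adj_penultimate hnil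
      refine ⟨hadj.symm, ?_⟩
      have h1 : T.dist r p.penultimate ≤ p.dropLast.length := dist_le _
      have h2 := hT.dist_eq_dist_add_one_of_adj r hadj
      have h3 := p.length_dropLast_add_one hnil
      omega
  choose π h0 h1 using hex
  refine ⟨π, h0 r rfl, fun x hx => (h1 x hx).1, fun x hx => (h1 x hx).2, fun x y hxy => ?_⟩
  rcases hT.dist_eq_dist_add_one_of_adj r hxy with h | h
  · have hx : x ≠ r := by rintro rfl; simp at h
    exact Or.inl ⟨hx, eq_of_adj_of_dist_eq hT (h1 x hx).1.symm hxy.symm (h1 x hx).2 h⟩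
  · have hy : y ≠ r := by rintro rfl; simp at h
    exact Or.inr ⟨hy, eq_of_adj_of_dist_eq hT (h1 y hy).1.symm hxy (h1 y hy).2 h⟩

/-- Greedy construction of a dominating set for `U` and a packing in `U` of the same size. -/
lemma exists_packing_dominating_finset [DecidableEq V] {T : SimpleGraph V} {r : V} {π : V → V}
    (hπ : IsParent T r π) (U : Finset V) :
    ∃ D S : Finset V, S ⊆ U ∧ IsPacking T S ∧ (∀ u ∈ U, u ∈ D ∨ ∃ d ∈ D, T.Adj u d) ∧
      D.card ≤ S.card := by
  classical
  induction U using Finset.strongInduction with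
  | H U ih =>
    rcases U.eq_empty_or_nonempty with rfl | hne
    · exact ⟨∅, ∅, by simp, by simp [IsPacking], by simp, le_rfl⟩
    · obtain ⟨u, hu, hmax⟩ := U.exists_max_image (T.dist r) hne
      let U' := U.filter (fun s => s ≠ π u ∧ ¬ T.Adj s (π u))
      have huU' : u ∉ U' := by
        simp only [U', Finset.mem_filter, not_and, not_not]
        intro _ h
        by_cases hur : u = r
        · exact absurd (hur ▸ hπ.root.symm) h
        · exact hπ.adj u hur
      have hss : U' ⊂ U := ⟨Finset.filter_subset _ _, fun h => huU' (h hu)⟩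
      obtain ⟨D, S, hSU, hS, hD, hcard⟩ := ih U' hss
      have hcross : ∀ s ∈ S, ∀ x, (x = u ∨ T.Adj x u) → (x = s ∨ T.Adj x s) → u = s := by
        intro s hs x h1 h2
        have hsU := Finset.mem_filter.1 (hSU hs)
        have hds := hmax s hsU.1
        exfalso
        obtain ⟨-, hs1, hs2⟩ := hsU
        have hadj := hπ.adj
        have hdist := hπ.dist
        have heq := hπ.eq_or_eq
        have hroot := hπ.root
        have hsu : s ≠ u := by rintro rfl; exact huU' (hSU hs)
        rcases h1 with rfl | h1 <;> rcases h2 with rfl | h2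
        · exact hsu rfl
        · rcases heq _ _ h2 with h | h
          · exact hs1 h.2.symm
          · have := hdist _ h.1
            grind
        · rcases heq _ _ h1 with h | h
          · have := hdist _ h.1
            grind
          · exact hs1 h.2.symm
        · rcases heq _ _ h1 with h | h <;> rcases heq _ _ h2 with h' | h'
          · grind
          · have := hdist _ h.1
            have := hdist _ h'.1
            grind
          · grind [T.adj_comm]
          · grind [T.adj_comm]
      refine ⟨insert (π u) D, insert u S, ?_, ?_, ?_, ?_⟩
      · exact Finset.insert_subset hu (hSU.trans hss.1)
      · intro s hs t ht x h1 h2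
        simp only [Finset.coe_insert, Set.mem_insert_iff, Finset.mem_coe] at hs ht
        rcases hs with rfl | hs <;> rcases ht with rfl | ht
        · rfl
        · exact hcross t ht x h1 h2
        · exact (hcross s hs x h2 h1).symm
        · exact hS s hs t ht x h1 h2
      · intro v hv
        by_cases hvU : v ∈ U'
        · rcases hD v hvU with h | ⟨d, hd, h⟩
          · exact Or.inl (Finset.mem_insert_of_mem h)
          · exact Or.inr ⟨d, Finset.mem_insert_of_mem hd, h⟩
        · simp only [U', Finset.mem_filter, hv, true_and, not_and, not_not] at hvU
          by_cases h : v = π u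
          · exact Or.inl (by simp [h])
          · exact Or.inr ⟨π u, Finset.mem_insert_self _ _, hvU h⟩
      · rw [Finset.card_insert_of_notMem (fun h => huU' (hSU h))]
        exact (Finset.card_insert_le _ _).trans (by omega)

/-- In a finite tree, the domination number equals the packing number. -/
lemma exists_packing_ncard_eq [Fintype V] {T : SimpleGraph V} (hT : T.IsTree) :
    ∃ S, IsPacking T S ∧ S.ncard = dominationNumber T := by
  classical
  obtain ⟨r⟩ := hT.connected.nonempty
  obtain ⟨π, hπ⟩ := exists_isParent hT r
  obtain ⟨D, S, -, hS, hD, hcard⟩ := exists_packing_dominating_finset hπ Finset.univ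
  refine ⟨S, hS, le_antisymm hS.ncard_le_dominationNumber ?_⟩
  have hdom : IsDominating T (D : Set V) := fun v hv => by
    simpa using (hD v (Finset.mem_univ v)).resolve_left hv
  have := dominationNumber_le hdom
  rw [Set.ncard_coe_finset] at this ⊢
  exact this.trans hcard

lemma IsParent.ne_of_eq {T : SimpleGraph V} {r : V} {π : V → V} (hπ : IsParent T r π)
    {x y : V} (hx : x ≠ r) (hy : y ≠ r) (hxy : π x = y) : π y ≠ x := by
  rintro h
  have h1 := hπ.dist x hx
  have h2 := hπ.dist y hy
  rw [hxy] at h1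
  rw [h] at h2
  omega

lemma IsParent.eq_of_edge_eq {T : SimpleGraph V} {r : V} {π : V → V} (hπ : IsParent T r π)
    {x y : V} (hx : x ≠ r) (hy : y ≠ r) (h : s(x, π x) = s(y, π y)) : x = y := by
  rcases Sym2.eq_iff.1 h with h | h
  · exact h.1
  · exact absurd h.1.symm (hπ.ne_of_eq hx hy h.2)

lemma IsParent.dist_add_dist_le {T : SimpleGraph V} (hT : T.IsTree) {r : V} {π : V → V}
    (hπ : IsParent T r π) {a : V} (ha : a ≠ r) (k : ℕ) (x : V) (hx : π^[k] x = a) :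
    T.dist a x + T.dist r a ≤ T.dist r x := by
  induction k generalizing x with
  | zero => obtain rfl : x = a := hx; simp
  | succ k ih =>
    have hxr : x ≠ r := by
      rintro rfl
      exact ha (hx.symm.trans (Function.iterate_fixed hπ.root _))
    have h1 := ih (π x) hx
    have h2 := hπ.dist x hxr
    have h3 := hT.connected.dist_triangle (u := a) (v := π x) (w := x)
    have h4 : T.dist (π x) x = 1 := dist_eq_one_iff_adj.2 (hπ.adj x hxr).symm
    omega

/-- For a set `F` of at most two edges, the root can be chosen such that no edge of `F` lies
below another one. -/
lemma exists_root_antichain [Finite V] {T : SimpleGraph V} (hT : T.IsTree) {F : Set (Sym2 V)}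
    (hF : F ⊆ T.edgeSet) (hcard : F.ncard ≤ 2) :
    ∃ r π, IsParent T r π ∧ ∀ x ≠ r, ∀ a ≠ r, s(x, π x) ∈ F → s(a, π a) ∈ F →
      ∀ k, π^[k] (π x) ≠ a := by
  have hself : ∀ {r : V} {π : V → V}, IsParent T r π → ∀ x ≠ r, ∀ k, π^[k] (π x) ≠ x := by
    intro r π hπ x hx k hk
    have h1 := hπ.dist_add_dist_le hT hx k _ hk
    have h2 := hπ.dist x hx
    omega
  obtain ⟨r₀⟩ := hT.connected.nonempty
  rcases F.eq_empty_or_nonempty with rfl | ⟨e, he⟩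
  · obtain ⟨π, hπ⟩ := exists_isParent hT r₀
    exact ⟨r₀, π, hπ, by simp⟩
  · obtain ⟨f, hf⟩ : ∃ f, ∀ g ∈ F, g = e ∨ g = f := by
      have h1 : (F \ {e}).ncard ≤ 1 := by
        have := Set.ncard_sdiff_singleton_add_one he (Set.toFinite F)
        omega
      rcases (Set.ncard_le_one_iff_eq (Set.toFinite _)).1 h1 with h | ⟨f, h⟩
      · exact ⟨e, fun g hg => Or.inl (by_contra fun hne => (h ▸ (⟨hg, hne⟩ : g ∈ F \ {e}) :
          g ∈ (∅ : Set (Sym2 V))))⟩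
      · exact ⟨f, fun g hg => or_iff_not_imp_left.2 fun hne =>
          (h ▸ (⟨hg, hne⟩ : g ∈ F \ {e}) : g ∈ ({f} : Set (Sym2 V)))⟩
    obtain ⟨b, b', hfb⟩ : ∃ b b', f = s(b, b') := ⟨_, _, (Quot.out_eq f).symm⟩
    obtain ⟨r, a₁, rfl, hle⟩ : ∃ r a₁, e = s(a₁, r) ∧ T.dist r b ≤ T.dist a₁ b := by
      induction e using Sym2.ind with
      | _ u v =>
        rcases le_total (T.dist u b) (T.dist v b) with h | h
        · exact ⟨u, v, Sym2.eq_swap, h⟩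
        · exact ⟨v, u, rfl, h⟩
    obtain ⟨π, hπ⟩ := exists_isParent hT r
    refine ⟨r, π, hπ, fun x hx a ha hxF haF k hk => ?_⟩
    have hedge : ∀ y ≠ r, s(y, π y) = s(a₁, r) → y = a₁ ∧ π y = r := by
      intro y hy h
      rcases Sym2.eq_iff.1 h with h | h
      · exact h
      · exact absurd h.1 hy
    rcases hf _ hxF with hxe | hxe
    · rw [(hedge x hx hxe).2, Function.iterate_fixed hπ.root] at hk
      exact ha hk.symm
    · rcases hf _ haF with hae | hae
      · obtain ⟨rfl, har⟩ := hedge a ha hae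
        obtain ⟨j, hj⟩ : ∃ j, π^[j] b = a := by
          rcases Sym2.eq_iff.1 (hxe.trans hfb) with h | h
          · exact ⟨k + 1, h.1 ▸ hk⟩
          · exact ⟨k, h.2 ▸ hk⟩
        have h1 := hπ.dist_add_dist_le hT ha j b hj
        have h2 := hπ.dist a ha
        omega
      · obtain rfl := hπ.eq_of_edge_eq hx ha (hxe.trans hae.symm)
        exact hself hπ x hx k hk

/-- A set of at most two edges of a tree is the boundary of a union of branches. -/
lemma exists_cut [Finite V] {T : SimpleGraph V} (hT : T.IsTree) {F : Set (Sym2 V)}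
    (hF : F ⊆ T.edgeSet) (hcard : F.ncard ≤ 2) :
    ∃ r π, ∃ X : Set V, IsParent T r π ∧ r ∉ X ∧ (∀ x, π x ∈ X → x ∈ X) ∧
      ∀ x ≠ r, s(x, π x) ∈ F ↔ x ∈ X ∧ π x ∉ X := by
  obtain ⟨r, π, hπ, hanti⟩ := exists_root_antichain hT hF hcard
  refine ⟨r, π, {x | ∃ a ≠ r, s(a, π a) ∈ F ∧ ∃ k, π^[k] x = a}, hπ, ?_, ?_, ?_⟩
  · rintro ⟨a, ha, -, k, hk⟩
    exact ha (hk.symm.trans (Function.iterate_fixed hπ.root _))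
  · rintro x ⟨a, ha, haF, k, hk⟩
    exact ⟨a, ha, haF, k + 1, hk⟩
  · intro x hx
    constructor
    · intro hxF
      refine ⟨⟨x, hx, hxF, 0, rfl⟩, ?_⟩
      rintro ⟨a, ha, haF, k, hk⟩
      exact hanti x hx a ha hxF haF k hk
    · rintro ⟨⟨a, ha, haF, k, hk⟩, hn⟩
      cases k with
      | zero => obtain rfl : x = a := hk; exact haF
      | succ k => exact absurd ⟨a, ha, haF, k, hk⟩ hn

/-- Shifting a perfect code towards the root inside a union `X` of branches dominates the graph
obtained by subdividing the boundary of `X`. -/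
lemma dominationNumber_subdivide_le [Finite V] {T : SimpleGraph V} {E : Set V}
    (hE : IsPerfectCode T E) (hE' : HasNoIsolatedOutside T E) {r : V} {π : V → V}
    (hπ : IsParent T r π) {X : Set V} (hr : r ∉ X) (hdown : ∀ x, π x ∈ X → x ∈ X)
    {F : Set (Sym2 V)} (hsub : F ⊆ T.edgeSet) (hF : ∀ x ≠ r, s(x, π x) ∈ F ↔ x ∈ X ∧ π x ∉ X) :
    dominationNumber (subdivide T F) ≤ E.ncard := by
  classical
  let g : V → V ⊕ F := fun e =>
    if e ∈ X then if h : s(e, π e) ∈ F then Sum.inr ⟨_, h⟩ else Sum.inl (π e) else Sum.inl e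
  have hg_out : ∀ e, e ∉ X → g e = Sum.inl e := fun e he => if_neg he
  have hg_cut : ∀ e, e ∈ X → ∀ h : s(e, π e) ∈ F, g e = Sum.inr ⟨_, h⟩ := fun e he h => by
    simp [g, he, h]
  have hg_in : ∀ e, e ∈ X → s(e, π e) ∉ F → g e = Sum.inl (π e) := fun e he h => by
    simp [g, he, h]
  have hne : ∀ x ∈ X, x ≠ r := by rintro x hx rfl; exact hr hx
  suffices hdom : IsDominating (subdivide T F) (g '' E) from
    (dominationNumber_le hdom).trans (Set.ncard_image_le (Set.toFinite E))
  intro v hv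
  by_contra hcon
  have hnot : ∀ e ∈ E, ¬ (v = g e ∨ (subdivide T F).Adj v (g e)) := by
    rintro e he (rfl | h)
    · exact hv ⟨e, he, rfl⟩
    · exact hcon ⟨_, ⟨e, he, rfl⟩, h⟩
  have hchild : ∀ x ∈ X, ∀ e ∈ E, π e = x → g e = Sum.inl x := by
    rintro x hx e he rfl
    have heX := hdown e hx
    exact hg_in e heX fun h => ((hF e (hne e heX)).1 h).2 hx
  rcases v with x | ⟨f, hf⟩
  · by_cases hxX : x ∈ X
    · have hxr := hne x hxX
      by_cases hxE : x ∈ E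
      · apply hnot x hxE
        by_cases h : s(x, π x) ∈ F
        · simp [hg_cut x hxX h]
        · simp [hg_in x hxX h, hπ.adj x hxr, h]
      · obtain ⟨e, he, hxe⟩ := hE.dominating x hxE
        rcases hπ.eq_or_eq x e hxe with ⟨-, h⟩ | ⟨-, h⟩
        · obtain ⟨y, hyE, hxy⟩ := hE' x hxE
          have hyx : y ≠ r ∧ π y = x := (hπ.eq_or_eq x y hxy).resolve_left fun h' =>
            hyE (by rwa [← h'.2, h])
          have hyX : y ∈ X := hdown y (hyx.2 ▸ hxX)
          obtain ⟨e', he', hye'⟩ := hE.dominating y hyE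
          have he'y : π e' = y := ((hπ.eq_or_eq y e' hye').resolve_left fun h' =>
            hxE (by rwa [← hyx.2, h'.2])).2
          apply hnot e' he'
          have hnF : s(y, π y) ∉ F := fun h' => ((hF y hyx.1).1 h').2 (hyx.2 ▸ hxX)
          rw [hyx.2, Sym2.eq_swap] at hnF
          simp [hchild y hyX e' he' he'y, hxy, hnF]
        · exact hnot e he (Or.inl (hchild x hxX e he h).symm)
    · by_cases hxE : x ∈ E
      · exact hnot x hxE (Or.inl (hg_out x hxX).symm)
      · obtain ⟨e, he, hxe⟩ := hE.dominating x hxE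
        apply hnot e he
        by_cases heX : e ∈ X
        · have her := hne e heX
          have hex : π e = x := by
            rcases hπ.eq_or_eq x e hxe with ⟨-, h⟩ | ⟨-, h⟩
            · exact absurd (hdown x (h ▸ heX)) hxX
            · exact h
          have heF : s(e, π e) ∈ F := (hF e her).2 ⟨heX, hex ▸ hxX⟩
          simp [hg_cut e heX heF, hex]
        · have hnF : s(x, e) ∉ F := by
            rcases hπ.eq_or_eq x e hxe with ⟨hxr, rfl⟩ | ⟨her, rfl⟩
            · exact fun h => hxX ((hF x hxr).1 h).1
            · exact fun h => heX ((hF e her).1 (Sym2.eq_swap ▸ h)).1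
          simp [hg_out e heX, hxe, hnF]
  · obtain ⟨u, hur, rfl⟩ : ∃ u ≠ r, f = s(u, π u) := by
      have hadj := hsub hf
      induction f using Sym2.ind with
      | _ a b =>
        rcases hπ.eq_or_eq a b hadj with ⟨h, rfl⟩ | ⟨h, rfl⟩
        · exact ⟨a, h, rfl⟩
        · exact ⟨b, h, Sym2.eq_swap⟩
    obtain ⟨huX, hvX⟩ := (hF u hur).1 hf
    by_cases huE : u ∈ E
    · exact hnot u huE (Or.inl (hg_cut u huX hf).symm)
    · obtain ⟨e, he, hue⟩ := hE.dominating u huE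
      apply hnot e he
      rcases hπ.eq_or_eq u e hue with ⟨-, rfl⟩ | ⟨-, h⟩
      · simp [hg_out _ hvX]
      · simp [hchild u huX e he h]

/-! ### Perfect codes and the domination subdivision number -/

lemma exists_adj_ne [Fintype V] {T : SimpleGraph V} (hT : T.Connected)
    (h3 : 3 ≤ Fintype.card V) {x s : V} (hx : ∀ y, T.Adj x y → y = s) :
    ∃ w, w ≠ x ∧ T.Adj s w := by
  classical
  by_contra! hcon
  have hwalk : ∀ u v, T.Walk u v → (u = x ∨ u = s) → (v = x ∨ v = s) := by
    intro u v p
    induction p with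
    | nil => exact id
    | cons h p ih => grind
  have huniv : (Finset.univ : Finset V) ⊆ {x, s} := fun v _ => by
    obtain ⟨p⟩ := hT x v
    simpa using hwalk x v p (Or.inl rfl)
  have := (Finset.card_le_card huniv).trans Finset.card_le_two
  rw [Finset.card_univ] at this
  omega

lemma exists_isPerfectCode_of_sd_eq_three [Fintype V] {T : SimpleGraph V} (hT : T.IsTree)
    (h3 : 3 ≤ Fintype.card V) (hsd : sd T = 3) :
    ∃ E, IsPerfectCode T E ∧ HasNoIsolatedOutside T E := by
  have hcode : ∀ S, IsPacking T S → S.ncard = dominationNumber T → IsPerfectCode T S := by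
    refine fun S hS hcard => ⟨hS, fun y hy => ?_⟩
    by_contra! hcon
    obtain ⟨z, hyz⟩ : ∃ z, T.Adj y z := by
      have : Nontrivial V := Fintype.one_lt_card_iff_nontrivial.1 (by omega)
      exact hT.connected.preconnected.exists_adj_of_nontrivial y
    have hz : z ∉ S := fun hz => hcon z hz hyz
    have h1 := sd_le_ncard (packingEdges_subset (S := S) hyz)
      (hcard ▸ hS.ncard_lt_dominationNumber_subdivide hy hz)
    have h2 : ∃ s, packingEdges T S y z ⊆ {s(y, z), s(z, s)} := by
      by_cases hs : ∃ s ∈ S, T.Adj z s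
      · obtain ⟨s, hs, hzs⟩ := hs
        refine ⟨s, ?_⟩
        rintro e (rfl | ⟨t, ht, ⟨hyt, rfl⟩ | ⟨hzt, rfl⟩⟩)
        · simp
        · exact absurd hyt (hcon t ht)
        · obtain rfl := hS s hs t ht z (Or.inr hzs) (Or.inr hzt)
          simp
      · refine ⟨y, ?_⟩
        rintro e (rfl | ⟨t, ht, ⟨hyt, rfl⟩ | ⟨hzt, rfl⟩⟩)
        · simp
        · exact absurd hyt (hcon t ht)
        · exact absurd ⟨t, ht, hzt⟩ hs
    obtain ⟨s, hs⟩ := h2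
    have h2 := Set.ncard_le_ncard hs (Set.toFinite _)
    have h3 := Set.ncard_insert_le s(y, z) {s(z, s)}
    rw [Set.ncard_singleton] at h3
    omega
  obtain ⟨S, hS, hcard⟩ := exists_packing_ncard_eq hT
  refine ⟨S, hcode S hS hcard, fun x hx => ?_⟩
  by_contra! hcon
  obtain ⟨s, hs, hxs⟩ := (hcode S hS hcard).dominating x hx
  have hleaf : ∀ y, T.Adj x y → y = s := fun y hxy =>
    hS y (by_contra fun h => hcon y h hxy) s hs x (Or.inr hxy) (Or.inr hxs)
  obtain ⟨w, hwx, hsw⟩ := exists_adj_ne hT.connected h3 hleaf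
  have hnbr : ∀ v, (v = x ∨ T.Adj v x) → (v = s ∨ T.Adj v s) := by
    rintro v (rfl | h)
    · exact Or.inr hxs
    · exact Or.inl (hleaf v h.symm)
  have hS' : IsPacking T (insert x (S \ {s})) := by
    rintro a (rfl | ha) b (rfl | hb) v h1 h2
    · rfl
    · exact absurd (hS s hs b hb.1 v (hnbr v h1) h2).symm hb.2
    · exact absurd (hS a ha.1 s hs v h1 (hnbr v h2)) ha.2
    · exact hS a ha.1 b hb.1 v h1 h2
  have hcard' : (insert x (S \ {s})).ncard = dominationNumber T := by
    rw [Set.ncard_insert_of_notMem (fun h => hx h.1),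
      Set.ncard_sdiff_singleton_add_one hs (Set.toFinite S), hcard]
  have hw : ∀ t ∈ S, (w = t ∨ T.Adj w t) → t = s := fun t ht h =>
    hS t ht s hs w h (Or.inr hsw.symm)
  have hwS' : w ∉ insert x (S \ {s}) := by
    rintro (h | h)
    · exact hwx h
    · exact h.2 (hw w h.1 (Or.inl rfl))
  obtain ⟨t, rfl | ht, hwt⟩ := (hcode _ hS' hcard').dominating w hwS'
  · exact hsw.ne' (hleaf w hwt.symm)
  · exact ht.2 (hw t ht.1 (Or.inr hwt))

lemma IsPerfectCode.packingEdges_ncard_le [Finite V] {T : SimpleGraph V} {E : Set V}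
    (hE : IsPerfectCode T E) {y z : V} (hy : y ∉ E) (hz : z ∉ E) :
    (packingEdges T E y z).ncard ≤ 3 := by
  obtain ⟨s, hs, hys⟩ := hE.dominating y hy
  obtain ⟨t, ht, hzt⟩ := hE.dominating z hz
  have hsub : packingEdges T E y z ⊆ {s(y, z), s(y, s), s(z, t)} := by
    rintro e (rfl | ⟨u, hu, ⟨hyu, rfl⟩ | ⟨hzu, rfl⟩⟩)
    · simp
    · obtain rfl := hE.packing s hs u hu y (Or.inr hys) (Or.inr hyu)
      simp
    · obtain rfl := hE.packing t ht u hu z (Or.inr hzt) (Or.inr hzu)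
      simp
  refine (Set.ncard_le_ncard hsub (Set.toFinite _)).trans ?_
  have h1 := Set.ncard_insert_le s(y, z) {s(y, s), s(z, t)}
  have h2 := Set.ncard_insert_le s(y, s) {s(z, t)}
  rw [Set.ncard_singleton] at h2
  omega

lemma IsPerfectCode.sd_eq_three [Finite V] [Nontrivial V] {T : SimpleGraph V} (hT : T.IsTree)
    {E : Set V} (hE : IsPerfectCode T E) (hE' : HasNoIsolatedOutside T E) : sd T = 3 := by
  obtain ⟨y, hy⟩ : ∃ y, y ∉ E := by
    by_contra! hall
    obtain ⟨v⟩ := hT.connected.nonempty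
    obtain ⟨w, hvw⟩ := hT.connected.preconnected.exists_adj_of_nontrivial v
    exact hvw.ne (hE.packing v (hall v) w (hall w) v (Or.inl rfl) (Or.inr hvw))
  obtain ⟨z, hz, hyz⟩ := hE' y hy
  have hlt := hE.packing.ncard_lt_dominationNumber_subdivide hy hz
  rw [hE.ncard_eq] at hlt
  have hsub := packingEdges_subset (S := E) hyz
  refine le_antisymm ((sd_le_ncard hsub hlt).trans (hE.packingEdges_ncard_le hy hz))
    (le_csInf ⟨_, _, hsub, rfl, hlt⟩ ?_)
  rintro k ⟨F, hF, rfl, hFlt⟩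
  by_contra! hk
  obtain ⟨r, π, X, hπ, hr, hdown, hcut⟩ := exists_cut hT hF (Nat.lt_succ_iff.1 hk)
  have := dominationNumber_subdivide_le hE hE' hπ hr hdown hF hcut
  rw [hE.ncard_eq] at this
  omega

/-! ### Perfect codes and general coronas -/

lemma exists_isPerfectCode_of_isGeneralCorona {W : Type*} {H : SimpleGraph W}
    (h : IsGeneralCoronaOfTree H) : ∃ E, IsPerfectCode H E ∧ HasNoIsolatedOutside H E := by
  obtain ⟨n, T, P, -, ⟨f⟩⟩ := h
  refine ⟨{x | ∃ v, f x = Sum.inl v}, ⟨?_, ?_⟩, ?_⟩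
  · rintro s ⟨a, ha⟩ t ⟨b, hb⟩ x h1 h2
    rw [← f.map_adj_iff, ← f.injective.eq_iff, ha] at h1
    rw [← f.map_adj_iff, ← f.injective.eq_iff, hb] at h2
    rw [← f.injective.eq_iff, ha, hb]
    rcases hfx : f x with v | p <;> simp_all
  · intro x hx
    rcases hfx : f x with v | p
    · exact absurd ⟨v, hfx⟩ hx
    · exact ⟨f.symm (Sum.inl p.val.1), ⟨_, f.apply_symm_apply _⟩,
        f.map_adj_iff.1 (by simp [hfx])⟩
  · intro x hx
    rcases hfx : f x with v | ⟨⟨v, A⟩, hA⟩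
    · exact absurd ⟨v, hfx⟩ hx
    · obtain ⟨u, hu⟩ := P.nonempty v A hA
      have hvu : T.Adj v u := P.subset_nbhd v A hA hu
      obtain ⟨B, hB, hvB⟩ := P.covers u v hvu.symm
      exact ⟨f.symm (Sum.inr ⟨(u, B), hB⟩), by simp,
        f.map_adj_iff.1 (by simp [hfx, hvu, hu, hvB])⟩

/-- The graph obtained from `G` by contracting the fibers of `c`. -/
def contraction {ι : Type*} (G : SimpleGraph V) (c : V → ι) : SimpleGraph ι where
  Adj i j := i ≠ j ∧ ∃ x y, c x = i ∧ c y = j ∧ G.Adj x y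
  symm := ⟨fun _ _ ⟨hne, x, y, hx, hy, h⟩ => ⟨hne.symm, y, x, hy, hx, h.symm⟩⟩
  loopless := ⟨fun _ h => h.1 rfl⟩

lemma connected_contraction {ι : Type*} {G : SimpleGraph V} {c : V → ι} (hG : G.Connected)
    (hc : Function.Surjective c) : (contraction G c).Connected := by
  have hwalk : ∀ u v, G.Walk u v → (contraction G c).Reachable (c u) (c v) := by
    intro u v p
    induction p with
    | nil => exact Reachable.refl _
    | @cons u w v h p ih =>
      by_cases huw : c u = c w
      · exact huw ▸ ih
      · exact (Adj.reachable (⟨huw, u, w, rfl, rfl, h⟩ : (contraction G c).Adj _ _)).trans ih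
  obtain ⟨v⟩ := hG.nonempty
  refine (connected_iff _).2 ⟨fun i j => ?_, ⟨c v⟩⟩
  obtain ⟨x, rfl⟩ := hc i
  obtain ⟨y, rfl⟩ := hc j
  obtain ⟨p⟩ := hG x y
  exact hwalk x y p

/-- An indexing `e` of a perfect code by `ι`, together with the map `c` sending every vertex to
the index of the unique code vertex in its closed neighborhood. -/
structure IsCodeMap {ι : Type*} (G : SimpleGraph V) (e : ι → V) (c : V → ι) : Prop where
  mem : ∀ x, x = e (c x) ∨ G.Adj x (e (c x))
  eq_of_mem : ∀ x i, x = e i ∨ G.Adj x (e i) → c x = i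
  exists_adj : ∀ x, x ≠ e (c x) → ∃ y, y ≠ e (c y) ∧ G.Adj x y

lemma IsPerfectCode.exists_isCodeMap [Finite V] {G : SimpleGraph V} {E : Set V}
    (hE : IsPerfectCode G E) (hE' : HasNoIsolatedOutside G E) :
    ∃ (n : ℕ) (e : Fin n → V) (c : V → Fin n), IsCodeMap G e c := by
  obtain ⟨n, ⟨φ⟩⟩ := Finite.exists_equiv_fin E
  have hex : ∀ x, ∃ i, x = (φ.symm i : V) ∨ G.Adj x (φ.symm i : V) := by
    intro x
    by_cases hx : x ∈ E
    · exact ⟨φ ⟨x, hx⟩, by simp⟩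
    · obtain ⟨u, hu, hxu⟩ := hE.dominating x hx
      exact ⟨φ ⟨u, hu⟩, by simp [hxu]⟩
  choose c hc using hex
  have huniq : ∀ x i, x = (φ.symm i : V) ∨ G.Adj x (φ.symm i : V) → c x = i := fun x i hi =>
    φ.symm.injective (Subtype.ext
      (hE.packing _ (φ.symm (c x)).2 _ (φ.symm i).2 x (hc x) hi))
  have hmem : ∀ x, x ≠ (φ.symm (c x) : V) ↔ x ∉ E := by
    refine fun x => not_congr ⟨fun h => h ▸ (φ.symm (c x)).2, fun h => ?_⟩
    rw [huniq x (φ ⟨x, h⟩) (by simp)]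
    simp
  refine ⟨n, fun i => φ.symm i, c, hc, huniq, fun x hx => ?_⟩
  obtain ⟨y, hy, hxy⟩ := hE' x ((hmem x).1 hx)
  exact ⟨y, (hmem y).2 hy, hxy⟩

namespace IsCodeMap

variable {ι : Type*} {T : SimpleGraph V} {e : ι → V} {c : V → ι}

lemma apply_code (h : IsCodeMap T e c) (i : ι) : c (e i) = i := h.eq_of_mem _ _ (Or.inl rfl)

lemma adj_code (h : IsCodeMap T e c) {x : V} (hx : x ≠ e (c x)) : T.Adj x (e (c x)) :=
  (h.mem x).resolve_left hx

lemma ne_code_of_adj (h : IsCodeMap T e c) {x y : V} (hxy : T.Adj x y) (hc : c x ≠ c y) :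
    x ≠ e (c x) := fun hx =>
  hc (h.eq_of_mem y (c x) (Or.inr (hx ▸ hxy.symm))).symm

variable {r : V} {π : V → V}

lemma parent_code (h : IsCodeMap T e c) (hπ : IsParent T r π) {x : V} (hx : x ≠ e (c x))
    (hπx : π x ≠ e (c x)) : e (c x) ≠ r ∧ π (e (c x)) = x :=
  (hπ.eq_or_eq _ _ (h.adj_code hx)).resolve_left fun h' => hπx h'.2

lemma parent_ne_code (h : IsCodeMap T e c) {x y : V} (hxy : T.Adj x y) (hy : y ≠ e (c y)) :
    y ≠ e (c x) := by
  rintro rfl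
  exact hy (by rw [h.apply_code])

/-- Adjacent vertices outside the code lie in different closed neighborhoods of code vertices. -/
lemma ne_of_adj (h : IsCodeMap T e c) (hπ : IsParent T r π) {x y : V} (hxy : T.Adj x y)
    (hx : x ≠ e (c x)) (hy : y ≠ e (c y)) : c x ≠ c y := by
  intro hc
  wlog hp : x ≠ r ∧ π x = y generalizing x y
  · exact this hxy.symm hy hx hc.symm ((hπ.eq_or_eq x y hxy).resolve_left hp)
  obtain ⟨her, hex⟩ := h.parent_code hπ hx (hp.2 ▸ h.parent_ne_code hxy hy)
  have hye := hc ▸ h.adj_code hy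
  have h1 := hπ.dist x hp.1
  have h2 := hπ.dist _ her
  rw [hp.2] at h1
  rw [hex] at h2
  rcases hπ.eq_or_eq _ _ hye with ⟨hyr, heq⟩ | ⟨-, heq⟩
  · have h3 := hπ.dist y hyr
    rw [heq, hc] at h3
    rw [hc] at h2
    omega
  · rw [hex] at heq
    exact hxy.ne heq

/-- The lower end `x` of an edge between two closed neighborhoods is the parent of the code vertex
next to it. -/
lemma parent_code_of_adj (h : IsCodeMap T e c) (hπ : IsParent T r π) {x y : V}
    (hxy : T.Adj x y) (hc : c x ≠ c y) (hp : π x = y) : e (c x) ≠ r ∧ π (e (c x)) = x :=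
  h.parent_code hπ (h.ne_code_of_adj hxy hc)
    (hp ▸ h.parent_ne_code hxy (h.ne_code_of_adj hxy.symm hc.symm))

lemma dist_lt_of_adj (h : IsCodeMap T e c) (hπ : IsParent T r π) {x y : V}
    (hxy : T.Adj x y) (hc : c x ≠ c y) (hxr : x ≠ r) (hp : π x = y) :
    T.dist r (e (c y)) < T.dist r (e (c x)) := by
  obtain ⟨her, hex⟩ := h.parent_code_of_adj hπ hxy hc hp
  have h1 := hπ.dist x hxr
  have h2 := hπ.dist _ her
  rw [hp] at h1
  rw [hex] at h2
  have hadj := h.adj_code (h.ne_code_of_adj hxy.symm hc.symm)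
  rcases hπ.eq_or_eq _ _ hadj with ⟨hyr, h'⟩ | ⟨hyr, h'⟩
  · have h3 := hπ.dist y hyr
    rw [h'] at h3
    omega
  · have h3 := hπ.dist _ hyr
    rw [h'] at h3
    omega

/-- There is at most one edge between the closed neighborhoods of two code vertices. -/
lemma eq_of_adj (h : IsCodeMap T e c) (hπ : IsParent T r π) {x y x' y' : V}
    (hxy : T.Adj x y) (hxy' : T.Adj x' y') (hx : c x = c x') (hy : c y = c y')
    (hc : c x ≠ c y) : x = x' := by
  have hc' : c x' ≠ c y' := hx ▸ hy ▸ hc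
  rcases hπ.eq_or_eq x y hxy with ⟨h1, h2⟩ | ⟨h1, h2⟩ <;>
    rcases hπ.eq_or_eq x' y' hxy' with ⟨h3, h4⟩ | ⟨h3, h4⟩
  · rw [← (h.parent_code_of_adj hπ hxy hc h2).2, ← (h.parent_code_of_adj hπ hxy' hc' h4).2, hx]
  · have h5 := h.dist_lt_of_adj hπ hxy hc h1 h2
    have h6 := h.dist_lt_of_adj hπ hxy'.symm hc'.symm h3 h4
    rw [hx, hy] at h5
    omega
  · have h5 := h.dist_lt_of_adj hπ hxy.symm hc.symm h1 h2
    have h6 := h.dist_lt_of_adj hπ hxy' hc' h3 h4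
    rw [hx, hy] at h5
    omega
  · rw [← h2, ← h4, ← (h.parent_code_of_adj hπ hxy.symm hc.symm h2).2,
      ← (h.parent_code_of_adj hπ hxy'.symm hc'.symm h4).2, hy]

lemma isTree_contraction [Finite ι] (h : IsCodeMap T e c) (hT : T.IsTree) :
    (contraction T c).IsTree := by
  have hconn : (contraction T c).Connected :=
    connected_contraction hT.connected fun i => ⟨e i, h.apply_code i⟩
  obtain ⟨i₀⟩ := hconn.nonempty
  obtain ⟨π, hπ⟩ := exists_isParent hT (e i₀)
  refine isTree_iff_connected_and_card.2
    ⟨hconn, le_antisymm ?_ hconn.card_vert_le_card_edgeSet_add_one⟩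
  have hsub : (contraction T c).edgeSet ⊆ (fun i => s(i, c (π (π (e i))))) '' {i₀}ᶜ := by
    intro f
    induction f using Sym2.ind with
    | _ i j =>
      rintro ⟨hne, x, y, rfl, rfl, hxy⟩
      rcases hπ.eq_or_eq x y hxy with ⟨-, hp⟩ | ⟨-, hp⟩
      · obtain ⟨h1, h2⟩ := h.parent_code_of_adj hπ hxy hne hp
        exact ⟨c x, fun h' => h1 (congrArg e h'), by simp [h2, hp]⟩
      · obtain ⟨h1, h2⟩ := h.parent_code_of_adj hπ hxy.symm hne.symm hp
        exact ⟨c y, fun h' => h1 (congrArg e h'), by simp [h2, hp, Sym2.eq_swap]⟩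
  have h1 := (Set.ncard_le_ncard hsub (Set.toFinite _)).trans (Set.ncard_image_le (Set.toFinite _))
  have h2 := Set.ncard_add_ncard_compl ({i₀} : Set ι)
  rw [Set.ncard_singleton] at h2
  rw [Nat.card_coe_set_eq]
  omega

/-- The indices of the other closed neighborhoods met by the neighbors of `x`. -/
def nbrIndices (T : SimpleGraph V) (c : V → ι) (x : V) : Set ι :=
  {j | j ≠ c x ∧ ∃ y, T.Adj x y ∧ c y = j}

lemma nbrIndices_nonempty (h : IsCodeMap T e c) (hπ : IsParent T r π) {x : V}
    (hx : x ≠ e (c x)) : (nbrIndices T c x).Nonempty := by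
  obtain ⟨y, hy, hxy⟩ := h.exists_adj x hx
  exact ⟨c y, (h.ne_of_adj hπ hxy hx hy).symm, y, hxy, rfl⟩

lemma eq_of_nbrIndices_inter (h : IsCodeMap T e c) (hπ : IsParent T r π) {x x' : V}
    (hc : c x = c x') (hne : (nbrIndices T c x ∩ nbrIndices T c x').Nonempty) : x = x' := by
  obtain ⟨j, ⟨hj, y, hxy, rfl⟩, ⟨-, y', hxy', hy'⟩⟩ := hne
  exact h.eq_of_adj hπ hxy hxy' hc hy'.symm hj.symm

/-- The vertex neighborhood partition of the contraction whose parts at `i` correspond to the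
neighbors of the code vertex `e i`. -/
def nbhdPartition (h : IsCodeMap T e c)
    (hπ : IsParent T r π) : NbhdPartition (contraction T c) where
  part i := {A | ∃ x, c x = i ∧ x ≠ e i ∧ nbrIndices T c x = A}
  nonempty := by
    rintro _ _ ⟨x, rfl, hx, rfl⟩
    exact h.nbrIndices_nonempty hπ hx
  subset_nbhd := by
    rintro _ _ ⟨x, rfl, hx, rfl⟩ j ⟨hj, y, hxy, hy⟩
    exact ⟨hj.symm, x, y, rfl, hy, hxy⟩
  covers := by
    rintro _ _ ⟨hne, x, y, rfl, rfl, hxy⟩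
    exact ⟨_, ⟨x, rfl, h.ne_code_of_adj hxy hne, rfl⟩, hne.symm, y, hxy, rfl⟩
  eq_of_inter := by
    rintro _ _ ⟨x, rfl, hx, rfl⟩ _ ⟨x', hc, hx', rfl⟩ hne
    rw [h.eq_of_nbrIndices_inter hπ hc.symm hne]

variable (h : IsCodeMap T e c) (hπ : IsParent T r π)

open Classical in
/-- The map sending code vertices to external and the other vertices to internal vertices. -/
noncomputable def toCorona (x : V) : CoronaVert (contraction T c) (h.nbhdPartition hπ) :=
  if hx : x = e (c x) then Sum.inl (c x)
  else Sum.inr ⟨(c x, nbrIndices T c x), x, rfl, hx, rfl⟩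

lemma toCorona_of_eq {x : V} (hx : x = e (c x)) : h.toCorona hπ x = Sum.inl (c x) :=
  dif_pos hx

lemma toCorona_of_ne {x : V} (hx : x ≠ e (c x)) :
    h.toCorona hπ x = Sum.inr ⟨(c x, nbrIndices T c x), x, rfl, hx, rfl⟩ :=
  dif_neg hx

lemma toCorona_bijective : Function.Bijective (h.toCorona hπ) := by
  constructor
  · intro x y hxy
    by_cases hx : x = e (c x) <;> by_cases hy : y = e (c y)
    · rw [h.toCorona_of_eq hπ hx, h.toCorona_of_eq hπ hy, Sum.inl.injEq] at hxy
      rw [hx, hy, hxy]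
    · simp [h.toCorona_of_eq hπ hx, h.toCorona_of_ne hπ hy] at hxy
    · simp [h.toCorona_of_ne hπ hx, h.toCorona_of_eq hπ hy] at hxy
    · rw [h.toCorona_of_ne hπ hx, h.toCorona_of_ne hπ hy] at hxy
      obtain ⟨hc, hA⟩ := Prod.mk.inj (congrArg Subtype.val (Sum.inr_injective hxy))
      refine h.eq_of_nbrIndices_inter hπ hc ?_
      rw [show nbrIndices T c y = nbrIndices T c x from hA.symm, Set.inter_self]
      exact h.nbrIndices_nonempty hπ hx
  · rintro (i | ⟨⟨i, A⟩, x, hi, hx, hA⟩)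
    · refine ⟨e i, ?_⟩
      rw [h.toCorona_of_eq hπ (by rw [h.apply_code]), h.apply_code]
    · obtain rfl : c x = i := hi
      obtain rfl : nbrIndices T c x = A := hA
      exact ⟨x, h.toCorona_of_ne hπ hx⟩

lemma corona_adj_toCorona_iff {x y : V} :
    (corona (contraction T c) (h.nbhdPartition hπ)).Adj (h.toCorona hπ x) (h.toCorona hπ y) ↔
      T.Adj x y := by
  by_cases hx : x = e (c x) <;> by_cases hy : y = e (c y)
  · simp only [h.toCorona_of_eq hπ hx, h.toCorona_of_eq hπ hy, not_corona_adj_inl_inl, false_iff]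
    intro hxy
    have := h.eq_of_mem x (c y) (Or.inr (hy ▸ hxy))
    exact hxy.ne (by rw [hx, hy, this])
  · simp only [h.toCorona_of_eq hπ hx, h.toCorona_of_ne hπ hy, corona_adj_inl_inr]
    refine ⟨fun hc => ?_, fun hxy => (h.eq_of_mem y (c x) (Or.inr (hx ▸ hxy.symm))).symm⟩
    rw [hx, hc]
    exact (h.adj_code hy).symm
  · simp only [h.toCorona_of_ne hπ hx, h.toCorona_of_eq hπ hy, corona_adj_inr_inl]
    refine ⟨fun hc => ?_, fun hxy => (h.eq_of_mem x (c y) (Or.inr (hy ▸ hxy))).symm⟩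
    rw [hy, hc]
    exact h.adj_code hx
  · simp only [h.toCorona_of_ne hπ hx, h.toCorona_of_ne hπ hy, corona_adj_inr_inr]
    constructor
    · rintro ⟨⟨hne, -⟩, ⟨-, y', hxy', hy'⟩, ⟨-, x', hyx', hx'⟩⟩
      obtain rfl := h.eq_of_adj hπ hxy' hyx'.symm hx'.symm hy' (hy'.symm ▸ hne)
      exact hyx'.symm
    · intro hxy
      have hne := h.ne_of_adj hπ hxy hx hy
      exact ⟨⟨hne, x, y, rfl, rfl, hxy⟩, ⟨hne.symm, y, hxy, rfl⟩, ⟨hne, x, hxy.symm, rfl⟩⟩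

/-- A tree with a code map is the general corona of the contraction. -/
noncomputable def coronaIso : T ≃g corona (contraction T c) (h.nbhdPartition hπ) where
  toEquiv := Equiv.ofBijective _ (h.toCorona_bijective hπ)
  map_rel_iff' := h.corona_adj_toCorona_iff hπ

end IsCodeMap

lemma IsPerfectCode.isGeneralCoronaOfTree [Finite V] {T : SimpleGraph V} (hT : T.IsTree)
    {E : Set V} (hE : IsPerfectCode T E) (hE' : HasNoIsolatedOutside T E) :
    IsGeneralCoronaOfTree T := by
  obtain ⟨n, e, c, h⟩ := hE.exists_isCodeMap hE'
  obtain ⟨r⟩ := hT.connected.nonempty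
  obtain ⟨π, hπ⟩ := exists_isParent hT r
  exact ⟨n, contraction T c, h.nbhdPartition hπ, h.isTree_contraction hT, ⟨h.coronaIso hπ⟩⟩


/-- A finite tree `T` with at least three vertices has domination
subdivision number 3 if and only if `T` is a general corona of a tree. -/
theorem sd_eq_three_iff_isGeneralCorona {V : Type u} [Fintype V]
    (T : SimpleGraph V) (hT : T.IsTree) (h3 : 3 ≤ Fintype.card V) :
    sd T = 3 ↔ IsGeneralCoronaOfTree T := by
  constructor
  · intro hsd
    obtain ⟨E, hE, hE'⟩ := exists_isPerfectCode_of_sd_eq_three hT h3 hsd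
    exact hE.isGeneralCoronaOfTree hT hE'
  · intro hcor
    have : Nontrivial V := Fintype.one_lt_card_iff_nontrivial.1 (by omega)
    obtain ⟨E, hE, hE'⟩ := exists_isPerfectCode_of_isGeneralCorona hcor
    exact hE.sd_eq_three hT hE'

end GenCorona
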